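/- arXiv:0909.3180 — 3 statements merged into one kernel-verified Lean document; each statement's English description precedes it below -/
import Mathlib

section
/- For every w ≥ 2, every feedback vertex set of the w × w grid graph has cardinality at least ⌊w/2⌋². (In particular, a w × w grid has a feedback vertex set of size at least c₁·w² only for a positive constant c₁; this is the quantitative form of the paper's claim that a (w × w)-grid has minimum feedback vertex set size Ω(w²).) -/
/-- The `w × w` grid graph: vertices are pairs in `Fin w × Fin w`, and two vertices
are adjacent iff they differ by exactly 1 in one coordinate and agree in the other. -/
def gridGraph (w : ℕ) : SimpleGraph (Fin w × Fin w) :=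
  SimpleGraph.fromRel (fun a b =>
    (a.1 = b.1 ∧ (a.2 : ℕ) + 1 = (b.2 : ℕ)) ∨ (a.2 = b.2 ∧ (a.1 : ℕ) + 1 = (b.1 : ℕ)))

theorem acyclic_no_square {V : Type*} {G : SimpleGraph V} (hG : G.IsAcyclic) {a b c d : V}
    (hab : G.Adj a b) (hbc : G.Adj b c) (hcd : G.Adj c d) (hda : G.Adj d a)
    (hac : a ≠ c) (hbd : b ≠ d) : False := by
  refine hG (.cons hab (.cons hbc (.cons hcd (.cons hda .nil)))) ?_
  have h1 := hab.ne
  have h2 := hbc.ne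
  have h3 := hcd.ne
  have h4 := hda.ne
  rw [SimpleGraph.Walk.cons_isCycle_iff]
  simp [SimpleGraph.Walk.isPath_def]
  grind

/-- For every `w ≥ 2`, every feedback vertex set of the `w × w` grid graph has
cardinality at least `⌊w/2⌋²`. -/
theorem stmt_2 (w : ℕ) (hw : 2 ≤ w) (F : Finset (Fin w × Fin w))
    (hF : ((gridGraph w).induce ((F : Set (Fin w × Fin w))ᶜ)).IsAcyclic) :
    (w / 2) ^ 2 ≤ F.card := by
  classical
  have key : Finset.range (w / 2) ×ˢ Finset.range (w / 2) ⊆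
      F.image (fun p => ((p.1 : ℕ) / 2, (p.2 : ℕ) / 2)) := by
    rintro ⟨i, j⟩ hij
    rw [Finset.mem_product, Finset.mem_range, Finset.mem_range] at hij
    obtain ⟨hi, hj⟩ := hij
    simp only at hi hj
    by_contra hn
    have hmem : ∀ (x y : ℕ) (hx : x < w) (hy : y < w), x / 2 = i → y / 2 = j →
        ((⟨x, hx⟩, ⟨y, hy⟩) : Fin w × Fin w) ∈ ((F : Set (Fin w × Fin w))ᶜ) := by
      intro x y hx hy h1 h2 hmem
      apply hn
      rw [Finset.mem_image]
      exact ⟨_, hmem, by simp [h1, h2]⟩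
    have ha := hmem (2 * i) (2 * j) (by omega) (by omega) (by omega) (by omega)
    have hb := hmem (2 * i + 1) (2 * j) (by omega) (by omega) (by omega) (by omega)
    have hc := hmem (2 * i + 1) (2 * j + 1) (by omega) (by omega) (by omega) (by omega)
    have hd := hmem (2 * i) (2 * j + 1) (by omega) (by omega) (by omega) (by omega)
    refine acyclic_no_square hF (a := ⟨_, ha⟩) (b := ⟨_, hb⟩) (c := ⟨_, hc⟩) (d := ⟨_, hd⟩)
      ?_ ?_ ?_ ?_ ?_ ?_ <;> simp [gridGraph]
  calc (w / 2) ^ 2 = (Finset.range (w / 2) ×ˢ Finset.range (w / 2)).card := by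
        rw [Finset.card_product, Finset.card_range, sq]
    _ ≤ _ := Finset.card_le_card key
    _ ≤ F.card := Finset.card_image_le
end

section
/- For every finite simple graph G and every natural number k, the number of minimal vertex covers of G of cardinality at most k is at most 2^k. (This is the observation on which the known FPT-algorithms for Connected Vertex Cover rely.) -/
/-- `C` is a vertex cover of `G`: every edge of `G` has at least one endpoint in `C`. -/
def IsVC {V : Type*} (G : SimpleGraph V) (C : Finset V) : Prop :=
  ∀ u v, G.Adj u v → u ∈ C ∨ v ∈ C

theorem stmt_5_aux {V : Type*} [Fintype V] [DecidableEq V] (G : SimpleGraph V) (k : ℕ) :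
    ∀ S : Finset V, {C : Finset V | S ⊆ C ∧
        IsVC G C ∧ (∀ C' : Finset V, C' ⊂ C → ¬ IsVC G C') ∧ C.card ≤ S.card + k}.ncard
          ≤ 2 ^ k := by
  induction k with
  | zero =>
    intro S
    refine (Set.ncard_le_ncard (t := {S}) ?_ (Set.toFinite _)).trans (by simp)
    rintro C ⟨hS, -, -, hc⟩
    exact (Finset.eq_of_subset_of_card_le hS hc).symm
  | succ k ih =>
    intro S
    by_cases h : IsVC G S
    · refine (Set.ncard_le_ncard (t := {S}) ?_ (Set.toFinite _)).trans
        (by simpa using Nat.one_le_two_pow)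
      rintro C ⟨hS, -, hm, -⟩
      by_contra hne
      exact hm S (hS.ssubset_of_ne fun e => hne e.symm) h
    · unfold IsVC at h
      push Not at h
      obtain ⟨u, v, huv, hu, hv⟩ := h
      have h1 := ih (insert u S)
      have h2 := ih (insert v S)
      rw [Finset.card_insert_of_notMem hu] at h1
      rw [Finset.card_insert_of_notMem hv] at h2
      rw [pow_succ, mul_two]
      refine le_trans ?_ (add_le_add h1 h2)
      refine le_trans (Set.ncard_le_ncard ?_ (Set.toFinite _)) (Set.ncard_union_le _ _)
      rintro C ⟨hS, hC, hm, hc⟩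
      rcases hC u v huv with h | h
      · exact Or.inl ⟨Finset.insert_subset h hS, hC, hm, by omega⟩
      · exact Or.inr ⟨Finset.insert_subset h hS, hC, hm, by omega⟩

/-- For every finite simple graph `G` and every natural number `k`, the number of
minimal vertex covers of `G` of cardinality at most `k` is at most `2 ^ k`. -/
theorem stmt_5 {V : Type*} [Fintype V] [DecidableEq V] (G : SimpleGraph V) (k : ℕ) :
    {C : Finset V |
        IsVC G C ∧ (∀ C' : Finset V, C' ⊂ C → ¬ IsVC G C') ∧ C.card ≤ k}.ncard ≤ 2 ^ k := by
  simpa using stmt_5_aux G k ∅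
end

section
/- Let G = (V,E) be a finite simple graph, r ∈ V, S ⊆ V, and p ≥ 1. Then the following are equivalent: (i) G contains a tree (connected acyclic subgraph) on at most p vertices whose vertex set contains r and all of S; (ii) there exist a finite simple graph T that is a tree, a distinguished vertex ρ of T, and a graph homomorphism φ : T → G such that φ(ρ) = r, S ⊆ φ(V(T)), and T has at most p − 1 edges. (This is the undirected form of the equivalence between Steiner trees rooted at r and branching walks of length at most p − 1 from r, which underlies the polynomial-space inclusion–exclusion algorithm.) -/
/-- Equivalence between Steiner trees rooted at `r` and branching walks (tree
homomorphisms) from `r`: `G` contains a tree on at most `p` vertices whose vertex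
set contains `r` and all of `S` iff there is a finite tree `T`, a distinguished
vertex `ρ` of `T`, and a graph homomorphism `φ : T → G` with `φ ρ = r`,
`S ⊆ φ(V(T))`, and `T` having at most `p - 1` edges. -/
theorem stmt_10 {V : Type*} [Fintype V] (G : SimpleGraph V) (r : V) (S : Set V)
    (p : ℕ) (hp : 1 ≤ p) :
    (∃ H : G.Subgraph, H.Connected ∧ H.coe.IsAcyclic ∧ r ∈ H.verts ∧ S ⊆ H.verts ∧
        H.verts.ncard ≤ p) ↔
      (∃ (n : ℕ) (T : SimpleGraph (Fin n)), T.Connected ∧ T.IsAcyclic ∧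
        ∃ (ρ : Fin n) (φ : T →g G), φ ρ = r ∧ S ⊆ Set.range φ ∧
          T.edgeSet.ncard ≤ p - 1) := by
  classical
  constructor
  · rintro ⟨H, hc, ha, hr, hS, hcard⟩
    let e : H.verts ≃ Fin (Fintype.card H.verts) := Fintype.equivFin H.verts
    let T : SimpleGraph (Fin (Fintype.card H.verts)) := H.coe.comap e.symm
    let i : T ≃g H.coe := SimpleGraph.Iso.comap e.symm H.coe
    have hT : T.IsTree := i.isTree_iff.mpr ⟨hc.coe, ha⟩
    refine ⟨_, T, hT.connected, hT.isAcyclic, e ⟨r, hr⟩, H.hom.comp i.toHom, ?_, ?_, ?_⟩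
    · exact congrArg Subtype.val (e.symm_apply_apply ⟨r, hr⟩)
    · intro s hs
      exact ⟨e ⟨s, hS hs⟩, congrArg Subtype.val (e.symm_apply_apply ⟨s, hS hs⟩)⟩
    · have h := (SimpleGraph.isTree_iff_connected_and_card.mp hT).2
      have h2 : H.verts.ncard = Fintype.card H.verts := by
        rw [← Nat.card_coe_set_eq, Nat.card_eq_fintype_card]
      rw [Nat.card_coe_set_eq, Nat.card_eq_fintype_card, Fintype.card_fin] at h
      omega
  · rintro ⟨n, T, hc, ha, ρ, φ, hρ, hS, hcard⟩
    let R : Set V := Set.range φ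
    let f : T →g G.induce R := ⟨fun x => ⟨φ x, x, rfl⟩, fun h => φ.map_adj h⟩
    have hf : Function.Surjective f := by
      rintro ⟨_, x, rfl⟩
      exact ⟨x, rfl⟩
    obtain ⟨T', hle, hT'⟩ := (hc.map f hf).exists_isTree_le
    let H : G.Subgraph :=
      { verts := R
        Adj := fun u v => ∃ (hu : u ∈ R) (hv : v ∈ R), T'.Adj ⟨u, hu⟩ ⟨v, hv⟩
        adj_sub := fun ⟨_, _, h⟩ => hle h
        edge_vert := fun ⟨h, _, _⟩ => h
        symm := ⟨fun _ _ ⟨h1, h2, h⟩ => ⟨h2, h1, h.symm⟩⟩ }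
    have hH : H.coe = T' := by
      ext ⟨u, hu⟩ ⟨v, hv⟩
      exact ⟨fun ⟨_, _, h⟩ => h, fun h => ⟨hu, hv, h⟩⟩
    refine ⟨H, ⟨?_⟩, ?_, ⟨ρ, hρ⟩, hS, ?_⟩
    · rw [hH]; exact hT'.connected
    · rw [hH]; exact hT'.isAcyclic
    · have h := (SimpleGraph.isTree_iff_connected_and_card.mp ⟨hc, ha⟩).2
      rw [Nat.card_coe_set_eq, Nat.card_eq_fintype_card, Fintype.card_fin] at h
      have h2 : (Set.range φ).ncard ≤ n := by
        rw [← Nat.card_coe_set_eq]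
        simpa using Finite.card_range_le φ
      change (Set.range φ).ncard ≤ p
      omega
end
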